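/- (Lemma 5.8(1): standard lop-frames and external quantification.) Let S be a set of local operators in the effective topos, let j be a local operator, and let Φ : (Set ℕ → Set ℕ) → Set ℕ be an ≡-relational predicate. Then the two sets ⋂_{k} ((P_S(k) ∧ ⟦j ≤ k⟧) → Φ(k)) (intersection over all k : Set ℕ → Set ℕ) and ⋂_{ℓ∈S} ((⟦is-lop[ℓ]⟧ ∧ ⟦j ≤ ℓ⟧) → Φ(ℓ)) are equivalent: each of the two realizability implications between them is nonempty. -/

import Mathlib

/-- Kleene application: evaluation of the `e`-th partial computable function at `n`. -/
def kapp (e n : ℕ) : Part ℕ := (Denumerable.ofNat Nat.Partrec.Code e).eval n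

/-- Realizability conjunction. -/
def rAnd (p q : Set ℕ) : Set ℕ := {x | ∃ a ∈ p, ∃ b ∈ q, x = Nat.pair a b}

/-- Realizability disjunction. -/
def rOr (p q : Set ℕ) : Set ℕ :=
  {x | (∃ a ∈ p, x = Nat.pair 0 a) ∨ ∃ b ∈ q, x = Nat.pair 1 b}

/-- Realizability implication. -/
def rImp (p q : Set ℕ) : Set ℕ := {e | ∀ n ∈ p, ∃ m ∈ kapp e n, m ∈ q}

/-- The set `⟦is-lop[j]⟧` of realizers witnessing that `j` is a local operator. -/
def isLop (j : Set ℕ → Set ℕ) : Set ℕ :=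
  rAnd (⋂ p : Set ℕ, rImp p (j p))
    (rAnd (⋂ p : Set ℕ, rImp (j (j p)) (j p))
      (⋂ p : Set ℕ, ⋂ q : Set ℕ, rImp (rImp p q) (rImp (j p) (j q))))

/-- The set `⟦j ≤ k⟧` of realizers of the pointwise order between operators. -/
def rLe (j k : Set ℕ → Set ℕ) : Set ℕ := ⋂ p : Set ℕ, rImp (j p) (k p)

/-- The set `(j ≡ k)` of realizers of the equivalence of two operators. -/
def rEquiv (j k : Set ℕ → Set ℕ) : Set ℕ := rAnd (rLe j k) (rLe k j)

/-- The standard lop-frame `P_S` associated with a set `S` of local operators. -/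
def PS (S : Set (Set ℕ → Set ℕ)) (k : Set ℕ → Set ℕ) : Set ℕ :=
  ⋃ l ∈ S, rAnd (isLop l) (rEquiv l k)

/-- The principal upper set `↑j` of an operator `j`. -/
def upSet (j : Set ℕ → Set ℕ) : Set (Set ℕ → Set ℕ) := {k | (rLe j k).Nonempty}

/-- A predicate `Φ` on operators is `≡`-relational. -/
def Relational (Φ : (Set ℕ → Set ℕ) → Set ℕ) : Prop :=
  (⋂ j : Set ℕ → Set ℕ, ⋂ k : Set ℕ → Set ℕ,
    rImp (rAnd (Φ j) (rEquiv j k)) (Φ k)).Nonempty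

/-!
Over a fixed index set, families of sets of numbers ordered by uniform realizability form the
effective tripos, which models intuitionistic logic, so both implications can be proved by natural
deduction. Since `l ≡ l` has a realizer uniform in `l`, an `l ∈ S` with a realizer of `⟦is-lop[l]⟧`
realizes `P_S(l)`, and the first implication is instantiation at `l`. Conversely `P_S(k)` provides
an `l ∈ S` with `l ≡ k`; then `j ≤ k` gives `j ≤ l`, the external hypothesis gives `Φ(l)`, and
relationality transports it to `Φ(k)`.
-/

theorem kapp_partrec : Partrec₂ kapp :=
  Nat.Partrec.Code.eval_part.comp
    ((Computable.ofNat Nat.Partrec.Code).comp Computable.fst) Computable.snd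

theorem exists_kapp_eq {f : ℕ → Part ℕ} (hf : Partrec f) : ∃ e, ∀ n, kapp e n = f n := by
  obtain ⟨c, hc⟩ := Nat.Partrec.Code.exists_code.1 (Partrec.nat_iff.1 hf)
  exact ⟨Encodable.encode c, fun n => by simp [kapp, hc]⟩

theorem exists_kapp_curry (t : ℕ) :
    ∃ e, ∀ n, ∃ c ∈ kapp e n, ∀ m, kapp c m = kapp t (Nat.pair n m) := by
  let c := Denumerable.ofNat Nat.Partrec.Code t
  have hcurry : Computable fun n => Encodable.encode (c.curry n) :=
    Computable.encode.comp
      (Nat.Partrec.Code.primrec₂_curry.comp (Primrec.const c) Primrec.id).to_comp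
  obtain ⟨e, he⟩ := exists_kapp_eq hcurry.partrec
  exact ⟨e, fun n => ⟨Encodable.encode (c.curry n), by simp [he],
    fun m => by simp [kapp, c, Nat.Partrec.Code.eval_curry]⟩⟩

/-- Entailment in the effective tripos over the index type `ι`: a single number realizes all the
implications `p i → q i`. The uniformity in `i` is what makes it match intersections of
implications. -/
def REntails {ι : Type*} (p q : ι → Set ℕ) : Prop := ∃ e, ∀ i, e ∈ rImp (p i) (q i)

namespace REntails

variable {ι κ : Type*} {p q r : ι → Set ℕ}

theorem of_partrec {f : ℕ → Part ℕ} (hf : Partrec f)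
    (h : ∀ i, ∀ n ∈ p i, ∃ m ∈ f n, m ∈ q i) : REntails p q := by
  obtain ⟨e, he⟩ := exists_kapp_eq hf
  exact ⟨e, fun i n hn => by simpa only [he] using h i n hn⟩

theorem of_computable {f : ℕ → ℕ} (hf : Computable f) (h : ∀ i, ∀ n ∈ p i, f n ∈ q i) :
    REntails p q :=
  of_partrec hf.partrec fun i n hn => ⟨f n, Part.mem_some _, h i n hn⟩

theorem of_subset (h : ∀ i, p i ⊆ q i) : REntails p q :=
  of_computable Computable.id fun i _ hn => h i hn

theorem refl (p : ι → Set ℕ) : REntails p p := of_subset fun _ => subset_rfl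

theorem trans (hpq : REntails p q) (hqr : REntails q r) : REntails p r := by
  obtain ⟨e, he⟩ := hpq
  obtain ⟨d, hd⟩ := hqr
  have happ : Partrec fun n => (kapp e n).bind (kapp d) :=
    (kapp_partrec.comp (Computable.const e) Computable.id).bind
      (kapp_partrec.comp (Computable.const d) Computable.snd)
  refine of_partrec happ fun i n hn => ?_
  obtain ⟨m, hm, hmq⟩ := he i n hn
  obtain ⟨k, hk, hkr⟩ := hd i m hmq
  exact ⟨k, Part.mem_bind hm hk, hkr⟩

theorem reindex (h : REntails p q) (f : κ → ι) :
    REntails (fun k => p (f k)) (fun k => q (f k)) :=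
  h.imp fun _ he k => he (f k)

theorem left (h : REntails p fun i => rAnd (q i) (r i)) : REntails p q := by
  refine h.trans (of_computable (Computable.fst.comp Computable.unpair) ?_)
  rintro i _ ⟨a, ha, b, -, rfl⟩
  simpa using ha

theorem right (h : REntails p fun i => rAnd (q i) (r i)) : REntails p r := by
  refine h.trans (of_computable (Computable.snd.comp Computable.unpair) ?_)
  rintro i _ ⟨a, -, b, hb, rfl⟩
  simpa using hb

theorem and (hq : REntails p q) (hr : REntails p r) :
    REntails p fun i => rAnd (q i) (r i) := by
  obtain ⟨e, he⟩ := hq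
  obtain ⟨d, hd⟩ := hr
  have hpair : Partrec fun n => (kapp e n).bind fun a => (kapp d n).map (Nat.pair a) :=
    (kapp_partrec.comp (Computable.const e) Computable.id).bind
      ((kapp_partrec.comp (Computable.const d) Computable.fst).map
        (Primrec₂.natPair.to_comp.comp (Computable.snd.comp Computable.fst) Computable.snd))
  refine of_partrec hpair fun i n hn => ?_
  obtain ⟨a, ha, haq⟩ := he i n hn
  obtain ⟨b, hb, hbr⟩ := hd i n hn
  exact ⟨Nat.pair a b, Part.mem_bind ha (Part.mem_map _ hb), a, haq, b, hbr, rfl⟩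

theorem modus_ponens (hqr : REntails p fun i => rImp (q i) (r i)) (hq : REntails p q) :
    REntails p r := by
  have happ : Partrec fun n : ℕ => kapp n.unpair.1 n.unpair.2 :=
    kapp_partrec.comp (Computable.fst.comp Computable.unpair)
      (Computable.snd.comp Computable.unpair)
  refine (hqr.and hq).trans (of_partrec happ ?_)
  rintro i _ ⟨c, hc, n, hn, rfl⟩
  simpa using hc n hn

/- Over an empty `κ` the intersection is all of `ℕ`, but a realizer of `p i → ℕ` must still be
defined on `p i`; hence quantifier and implication are introduced together, where currying yields a
total realizer. -/
theorem iInter_imp_intro {q r : ι → κ → Set ℕ}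
    (h : REntails (fun x : ι × κ => rAnd (p x.1) (q x.1 x.2)) fun x => r x.1 x.2) :
    REntails p fun i => ⋂ k, rImp (q i k) (r i k) := by
  obtain ⟨t, ht⟩ := h
  obtain ⟨e, he⟩ := exists_kapp_curry t
  refine ⟨e, fun i n hn => ?_⟩
  obtain ⟨c, hc, hct⟩ := he n
  refine ⟨c, hc, Set.mem_iInter.2 fun k m hm => ?_⟩
  rw [hct]
  exact ht (i, k) _ ⟨n, hn, m, hm, rfl⟩

theorem iInter_apply {q : ι → κ → Set ℕ} (h : REntails p fun i => ⋂ k, q i k) (f : ι → κ) :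
    REntails p fun i => q i (f i) :=
  h.trans (of_subset fun i => Set.iInter_subset (q i) (f i))

theorem iUnion_elim {q : ι → κ → Set ℕ} (hq : REntails p fun i => ⋃ k, q i k)
    (h : REntails (fun x : ι × κ => rAnd (p x.1) (q x.1 x.2)) fun x => r x.1) :
    REntails p r := by
  obtain ⟨e, he⟩ := h
  refine ((refl p).and hq).trans ⟨e, ?_⟩
  rintro i _ ⟨a, ha, b, hb, rfl⟩
  obtain ⟨k, hk⟩ := Set.mem_iUnion.1 hb
  exact he (i, k) _ ⟨a, ha, b, hk, rfl⟩

variable {j k l : ι → Set ℕ → Set ℕ}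

theorem rLe_refl (p : ι → Set ℕ) (j : ι → Set ℕ → Set ℕ) :
    REntails p fun i => rLe (j i) (j i) :=
  iInter_imp_intro (refl _).right

theorem rLe_apply (h : REntails p fun i => rLe (j i) (k i)) {s : ι → Set ℕ}
    (hs : REntails p fun i => j i (s i)) : REntails p fun i => k i (s i) :=
  (iInter_apply h s).modus_ponens hs

theorem rLe_trans (hjk : REntails p fun i => rLe (j i) (k i))
    (hkl : REntails p fun i => rLe (k i) (l i)) : REntails p fun i => rLe (j i) (l i) := by
  refine iInter_imp_intro ?_
  have hp : REntails (fun x : ι × Set ℕ => rAnd (p x.1) (j x.1 x.2)) fun x => p x.1 :=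
    (refl _).left
  have hj : REntails (fun x : ι × Set ℕ => rAnd (p x.1) (j x.1 x.2)) fun x => j x.1 x.2 :=
    (refl _).right
  exact (hp.trans (hkl.reindex Prod.fst)).rLe_apply ((hp.trans (hjk.reindex Prod.fst)).rLe_apply hj)

theorem rEquiv_refl (p : ι → Set ℕ) (j : ι → Set ℕ → Set ℕ) :
    REntails p fun i => rEquiv (j i) (j i) :=
  (rLe_refl p j).and (rLe_refl p j)

theorem transport {Φ : (Set ℕ → Set ℕ) → Set ℕ} (hΦ : Relational Φ)
    (hj : REntails p fun i => Φ (j i)) (hjk : REntails p fun i => rEquiv (j i) (k i)) :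
    REntails p fun i => Φ (k i) := by
  obtain ⟨t, ht⟩ := hΦ
  simp only [Set.mem_iInter] at ht
  exact (hj.and hjk).trans ⟨t, fun i => ht (j i) (k i)⟩

end REntails

theorem PS_eq_iUnion (S : Set (Set ℕ → Set ℕ)) (k : Set ℕ → Set ℕ) :
    PS S k = ⋃ l : S, rAnd (isLop l) (rEquiv l k) :=
  Set.biUnion_eq_iUnion S fun l _ => rAnd (isLop l) (rEquiv l k)

theorem isLop_rEntails_PS (S : Set (Set ℕ → Set ℕ)) :
    REntails (fun l : S => isLop l) fun l => PS S l :=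
  ((REntails.refl _).and (.rEquiv_refl _ _)).trans <| .of_subset fun l => by
    rw [PS_eq_iUnion]
    exact Set.subset_iUnion (fun l' : S => rAnd (isLop l') (rEquiv l' l)) l

theorem rImp_nonempty_of_rEntails {p q : Set ℕ}
    (h : REntails (fun _ : Unit => p) fun _ => q) : (rImp p q).Nonempty :=
  h.imp fun _ he => he ()

theorem rImp_iInter_PS_iInter_mem_nonempty (S : Set (Set ℕ → Set ℕ)) (j : Set ℕ → Set ℕ)
    (Φ : (Set ℕ → Set ℕ) → Set ℕ) :
    (rImp (⋂ k : Set ℕ → Set ℕ, rImp (rAnd (PS S k) (rLe j k)) (Φ k))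
      (⋂ l ∈ S, rImp (rAnd (isLop l) (rLe j l)) (Φ l))).Nonempty := by
  rw [Set.biInter_eq_iInter]
  refine rImp_nonempty_of_rEntails (.iInter_imp_intro ?_)
  have hctx := REntails.refl fun x : Unit × S =>
    rAnd (⋂ k, rImp (rAnd (PS S k) (rLe j k)) (Φ k)) (rAnd (isLop x.2) (rLe j x.2))
  have hPS : REntails _ fun x : _ × S => PS S x.2 :=
    hctx.right.left.trans ((isLop_rEntails_PS S).reindex Prod.snd)
  exact (hctx.left.iInter_apply fun x => x.2).modus_ponens (hPS.and hctx.right.right)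

theorem rImp_iInter_mem_iInter_PS_nonempty (S : Set (Set ℕ → Set ℕ)) (j : Set ℕ → Set ℕ)
    {Φ : (Set ℕ → Set ℕ) → Set ℕ} (hΦ : Relational Φ) :
    (rImp (⋂ l ∈ S, rImp (rAnd (isLop l) (rLe j l)) (Φ l))
      (⋂ k : Set ℕ → Set ℕ, rImp (rAnd (PS S k) (rLe j k)) (Φ k))).Nonempty := by
  rw [Set.biInter_eq_iInter]
  simp only [PS_eq_iUnion]
  refine rImp_nonempty_of_rEntails <|
    .iInter_imp_intro <| .iUnion_elim (REntails.refl _).right.left ?_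
  have hctx := REntails.refl fun x : (Unit × (Set ℕ → Set ℕ)) × S =>
    rAnd (rAnd (⋂ l : S, rImp (rAnd (isLop l) (rLe j l)) (Φ l))
        (rAnd (⋃ l : S, rAnd (isLop l) (rEquiv l x.1.2)) (rLe j x.1.2)))
      (rAnd (isLop x.2) (rEquiv x.2 x.1.2))
  have hequiv : REntails _ fun x : (_ × (Set ℕ → Set ℕ)) × S => rEquiv x.2 x.1.2 :=
    hctx.right.right
  have hle : REntails _ fun x : (_ × (Set ℕ → Set ℕ)) × S => rLe j x.2 :=
    hctx.left.right.right.rLe_trans hequiv.right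
  have hΦl : REntails _ fun x : (_ × (Set ℕ → Set ℕ)) × S => Φ x.2 :=
    (hctx.left.left.iInter_apply fun x => x.2).modus_ponens (hctx.right.left.and hle)
  exact hΦl.transport hΦ hequiv

theorem stdLopFrame_iInter_general (S : Set (Set ℕ → Set ℕ)) (j : Set ℕ → Set ℕ)
    (Φ : (Set ℕ → Set ℕ) → Set ℕ) (hΦ : Relational Φ) :
    (rImp (⋂ k : Set ℕ → Set ℕ, rImp (rAnd (PS S k) (rLe j k)) (Φ k))
        (⋂ l ∈ S, rImp (rAnd (isLop l) (rLe j l)) (Φ l))).Nonempty ∧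
    (rImp (⋂ l ∈ S, rImp (rAnd (isLop l) (rLe j l)) (Φ l))
        (⋂ k : Set ℕ → Set ℕ, rImp (rAnd (PS S k) (rLe j k)) (Φ k))).Nonempty :=
  ⟨rImp_iInter_PS_iInter_mem_nonempty S j Φ, rImp_iInter_mem_iInter_PS_nonempty S j hΦ⟩

/-- Lemma 5.8(1): for a standard lop-frame, internal universal quantification over
`P_S` is equivalent to external universal quantification over `S`. -/
theorem stdLopFrame_iInter (S : Set (Set ℕ → Set ℕ)) (hS : ∀ l ∈ S, (isLop l).Nonempty)
    (j : Set ℕ → Set ℕ) (hj : (isLop j).Nonempty)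
    (Φ : (Set ℕ → Set ℕ) → Set ℕ) (hΦ : Relational Φ) :
    (rImp (⋂ k : Set ℕ → Set ℕ, rImp (rAnd (PS S k) (rLe j k)) (Φ k))
        (⋂ l ∈ S, rImp (rAnd (isLop l) (rLe j l)) (Φ l))).Nonempty ∧
    (rImp (⋂ l ∈ S, rImp (rAnd (isLop l) (rLe j l)) (Φ l))
        (⋂ k : Set ℕ → Set ℕ, rImp (rAnd (PS S k) (rLe j k)) (Φ k))).Nonempty :=
  stdLopFrame_iInter_general S j Φ hΦ
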